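/- There exists N such that for all n ≥ N the following holds for D = {i : 1 ≤ i ≤ 2^{n+1} − 3, i odd}: every irreducible solution U of length ℓ for D whose density s(U)/ℓ lies strictly between 2/(2n−1) and 1/(n−1) has density exactly 3/(3n−2) (weight 3, length 3n−2), and, up to shift, is one of the following four solutions of length 3n−2: for i ∈ {5, 7}: (1) u_{2^{n+1}−3} = 2^{2n−3}, u_{3·2^{n−1}−i} = 2^{n−2}, u_{i·2^{n−2}−1} = 1 (all other u_d = 0); (2) u_{2^{n+1}−i} = 2^{2n−3}, u_{i·2^{n−2}−3} = 2^{n−1}, u_{3·2^{n−1}−1} = 1 (all other u_d = 0). (In each case ∑ d·u_d = 2^{3n−2} − 1.) -/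

import Mathlib

/-- The binary weight `s₂(m)`: the sum of the base-2 digits of `m`. -/
def s2 (m : ℕ) : ℕ := (Nat.digits 2 m).sum

/-- The shift map on `{0, …, 2^ℓ - 1}`: it fixes `2^ℓ - 1` and sends any other `i`
to the remainder of `2·i` modulo `2^ℓ - 1`. -/
def shift2 (ℓ i : ℕ) : ℕ := if i = 2 ^ ℓ - 1 then i else (2 * i) % (2 ^ ℓ - 1)

/-- `U : ℕ → ℕ` (supported on `D`) is a solution of length `ℓ` for `D`:
`0 ≤ u_d ≤ 2^ℓ - 1` and `∑ d·u_d` is a positive multiple of `2^ℓ - 1`. -/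
structure IsSolution (D : Finset ℕ) (ℓ : ℕ) (U : ℕ → ℕ) : Prop where
  len_pos : 1 ≤ ℓ
  bounded : ∀ d, U d ≤ 2 ^ ℓ - 1
  supp_sub : ∀ d, d ∉ D → U d = 0
  dvd : (2 ^ ℓ - 1) ∣ ∑ d ∈ D, d * U d
  pos : 0 < ∑ d ∈ D, d * U d

/-- The weight `s(U) = ∑_{d ∈ D} s₂(u_d)` of a solution. -/
def weight (D : Finset ℕ) (U : ℕ → ℕ) : ℕ := ∑ d ∈ D, s2 (U d)

/-- The support map `φ_U(k) = (∑_{d ∈ D} d·δ^k(u_d)) / (2^ℓ - 1)` of a solution,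
viewed as an `ℓ`-periodic function on `ℕ`. -/
def supportMap (D : Finset ℕ) (ℓ : ℕ) (U : ℕ → ℕ) (k : ℕ) : ℕ :=
  (∑ d ∈ D, d * (shift2 ℓ)^[k] (U d)) / (2 ^ ℓ - 1)

/-- A solution is irreducible when its support map is injective on `ℤ/ℓℤ`,
i.e. injective on `{0, …, ℓ-1}`. -/
def IrreducibleSol (D : Finset ℕ) (ℓ : ℕ) (U : ℕ → ℕ) : Prop :=
  Set.InjOn (supportMap D ℓ U) ↑(Finset.range ℓ)

/-- `U` is a shift of `V` (coordinatewise iterate of the shift map). -/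
def IsShiftOf (ℓ : ℕ) (U V : ℕ → ℕ) : Prop :=
  ∃ k, ∀ d, U d = (shift2 ℓ)^[k] (V d)

/-- The set of odd integers `1 ≤ i ≤ d`. -/
def oddUpTo (d : ℕ) : Finset ℕ := (Finset.range (d + 1)).filter (fun i => i % 2 = 1)

/-- `D = {i : 1 ≤ i ≤ 2^{n+1} - 3, i odd}`. -/
def oddD (n : ℕ) : Finset ℕ := oddUpTo (2 ^ (n + 1) - 3)

/-- The solution with `u_a = 1` and all other coordinates `0`. -/
def sol1 (a : ℕ) : ℕ → ℕ := fun d => if d = a then 1 else 0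

/-- The solution with `u_a = x`, `u_b = y` and all other coordinates `0`. -/
def sol2 (a x b y : ℕ) : ℕ → ℕ := fun d => if d = a then x else if d = b then y else 0

/-- The solution with `u_a = x`, `u_b = y`, `u_c = z` and all other coordinates `0`. -/
def sol3 (a x b y c z : ℕ) : ℕ → ℕ :=
  fun d => if d = a then x else if d = b then y else if d = c then z else 0

/-! Writing `φ` for the support map, `φ (k + 1) = 2 φ k - e k`, where `e k` is a sum of `m k` odd
numbers at most `2 ^ (n + 1) - 3`, and `∑ m` over a period is the weight `w`. Summing the increments
of `log₂ φ`, each lowered by `(n - 1) * m k`, around the cycle gives a total excess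
`E = ℓ - (n - 1) w`, and the density hypothesis says `1 ≤ E` and `2 E < w`. A step contributes
positively to `E` only if it involves one of the values `1`, `3`, `2 ^ n`, each of which is taken at
most once since `φ` is injective. A step with `m k ≥ 2`, or one landing on an odd value at least
`16`, would cost too much, and the remaining steps satisfy bounds that add up to `E ≤ 4 - w`.
Hence `w = 3`, `E = 1`, and all these bounds are equalities, which forces the cycle
`1, 2, …, 2 ^ n, a, 2 a, …, b, 2 b, …` with `{a, b} = {3, 5}` or `{3, 7}`. -/

theorem exists_eq_one_of_sum_eq_one {ι : Type*} {s : Finset ι} {f : ι → ℕ}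
    (h : ∑ i ∈ s, f i = 1) : ∃ i ∈ s, f i = 1 ∧ ∀ j ∈ s, j ≠ i → f j = 0 := by
  classical
  obtain ⟨i, hi, hfi⟩ := Finset.exists_ne_zero_of_sum_ne_zero (h.trans_ne one_ne_zero)
  rw [← Finset.add_sum_erase s f hi] at h
  have herase : ∑ j ∈ s.erase i, f j = 0 := by omega
  refine ⟨i, hi, by omega, fun j hj hji => ?_⟩
  exact Finset.sum_eq_zero_iff.1 herase j (Finset.mem_erase.2 ⟨hji, hj⟩)

theorem eq_two_pow_mul_of_doubling {f : ℕ → ℕ} {k j : ℕ}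
    (h : ∀ i < j, f (k + i + 1) = 2 * f (k + i)) : f (k + j) = 2 ^ j * f k := by
  induction j with
  | zero => simp
  | succ j ih =>
    rw [← add_assoc, h j j.lt_succ_self, ih fun i hi => h i (hi.trans j.lt_succ_self)]
    ring

theorem two_pow_mul_odd_inj {s t c d : ℕ} (hc : Odd c) (hd : Odd d)
    (h : 2 ^ s * c = 2 ^ t * d) : s = t ∧ c = d := by
  have hst : s = t := by
    simpa [padicValNat.mul, hc.pos.ne', hd.pos.ne', padicValNat.eq_zero_of_not_dvd,
      hc.not_two_dvd_nat, hd.not_two_dvd_nat] using congrArg (padicValNat 2) h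
  subst hst
  exact ⟨rfl, Nat.eq_of_mul_eq_mul_left (by positivity) h⟩

theorem sum_range_add_of_periodic {M : Type*} [AddCommMonoid M] {f : ℕ → M} {ℓ : ℕ}
    (hf : Function.Periodic f ℓ) (t : ℕ) :
    ∑ k ∈ Finset.range ℓ, f (k + t) = ∑ k ∈ Finset.range ℓ, f k := by
  induction t with
  | zero => rfl
  | succ t ih =>
    rw [← ih]
    cases ℓ with
    | zero => rfl
    | succ ℓ =>
      rw [Finset.sum_range_succ, Finset.sum_range_succ', zero_add]
      congr 1
      · exact Finset.sum_congr rfl fun k _ => by rw [add_right_comm, add_assoc]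
      · rw [show ℓ + (t + 1) = t + (ℓ + 1) by omega, hf]

theorem s2_two_mul_add {t : ℕ} (a : ℕ) (ht : t < 2) : s2 (2 * a + t) = s2 a + t := by
  unfold s2
  rcases Nat.eq_zero_or_pos (2 * a + t) with h | h
  · obtain ⟨rfl, rfl⟩ : a = 0 ∧ t = 0 := by omega
    rfl
  · rw [add_comm (2 * a), Nat.digits_add 2 one_lt_two t a ht (by omega), List.sum_cons, add_comm]

theorem sum_range_succ_mul_two_pow (t : ℕ → ℕ) (ℓ : ℕ) :
    ∑ k ∈ Finset.range (ℓ + 1), t k * 2 ^ (ℓ + 1 - 1 - k) =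
      2 * ∑ k ∈ Finset.range ℓ, t k * 2 ^ (ℓ - 1 - k) + t ℓ := by
  rw [Finset.sum_range_succ, Finset.mul_sum]
  congr 1
  · refine Finset.sum_congr rfl fun k hk => ?_
    have hk := Finset.mem_range.1 hk
    rw [show ℓ + 1 - 1 - k = ℓ - 1 - k + 1 by omega]
    ring
  · simp

theorem s2_sum_mul_two_pow {t : ℕ → ℕ} {ℓ : ℕ} (ht : ∀ k, t k < 2) :
    s2 (∑ k ∈ Finset.range ℓ, t k * 2 ^ (ℓ - 1 - k)) = ∑ k ∈ Finset.range ℓ, t k := by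
  induction ℓ with
  | zero => simp [s2]
  | succ ℓ ih =>
    rw [sum_range_succ_mul_two_pow, s2_two_mul_add _ (ht ℓ), ih, Finset.sum_range_succ]

theorem s2_two_pow (j : ℕ) : s2 (2 ^ j) = 1 := by
  induction j with
  | zero => simp [s2]
  | succ j ih => rw [pow_succ', ← add_zero (2 * 2 ^ j), s2_two_mul_add _ two_pos, ih, add_zero]

/-- The leading binary digit of `δ^k(u)` as an `ℓ`-digit number, which is the `k`-th most
significant digit of `u` itself. -/
def topDigit (ℓ k u : ℕ) : ℕ := (shift2 ℓ)^[k] u / 2 ^ (ℓ - 1)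

section Shift

variable {ℓ u : ℕ}

theorem two_pow_eq_two_mul_pred (hℓ : 1 ≤ ℓ) : 2 ^ ℓ = 2 * 2 ^ (ℓ - 1) := by
  rw [← pow_succ', Nat.sub_add_cancel hℓ]

theorem div_two_pow_pred_lt_two (hℓ : 1 ≤ ℓ) (hu : u ≤ 2 ^ ℓ - 1) : u / 2 ^ (ℓ - 1) < 2 := by
  have hpos : 0 < 2 ^ ℓ := by positivity
  rw [Nat.div_lt_iff_lt_mul (by positivity), ← two_pow_eq_two_mul_pred hℓ]
  omega

theorem shift2_le (hu : u ≤ 2 ^ ℓ - 1) : shift2 ℓ u ≤ 2 ^ ℓ - 1 := by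
  unfold shift2
  split_ifs with h
  · exact hu
  · exact (Nat.mod_lt _ (by omega)).le

theorem shift2_add_mul_div (hℓ : 1 ≤ ℓ) (hu : u ≤ 2 ^ ℓ - 1) :
    shift2 ℓ u + (2 ^ ℓ - 1) * (u / 2 ^ (ℓ - 1)) = 2 * u := by
  have hpow := two_pow_eq_two_mul_pred hℓ
  have hpos : 0 < 2 ^ (ℓ - 1) := by positivity
  unfold shift2
  rcases lt_or_ge u (2 ^ (ℓ - 1)) with hlt | hge
  · rw [Nat.div_eq_of_lt hlt, mul_zero, add_zero]
    split_ifs with h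
    · omega
    · exact Nat.mod_eq_of_lt (by omega)
  · have hdiv : u / 2 ^ (ℓ - 1) = 1 := by
      rw [Nat.div_eq_iff hpos]
      omega
    rw [hdiv, mul_one]
    split_ifs with h
    · omega
    · rw [Nat.mod_eq_sub_mod (by omega), Nat.mod_eq_of_lt (by omega)]
      omega

theorem iterate_shift2_le (hu : u ≤ 2 ^ ℓ - 1) (k : ℕ) : (shift2 ℓ)^[k] u ≤ 2 ^ ℓ - 1 := by
  induction k with
  | zero => exact hu
  | succ k ih => rw [Function.iterate_succ_apply']; exact shift2_le ih

theorem iterate_shift2_zero (k : ℕ) : (shift2 ℓ)^[k] 0 = 0 :=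
  Function.iterate_fixed (by simp [shift2]) k

theorem topDigit_zero (k : ℕ) : topDigit ℓ k 0 = 0 := by
  rw [topDigit, iterate_shift2_zero, Nat.zero_div]

theorem topDigit_lt_two (hℓ : 1 ≤ ℓ) (hu : u ≤ 2 ^ ℓ - 1) (k : ℕ) : topDigit ℓ k u < 2 :=
  div_two_pow_pred_lt_two hℓ (iterate_shift2_le hu k)

theorem iterate_shift2_succ_add (hℓ : 1 ≤ ℓ) (hu : u ≤ 2 ^ ℓ - 1) (k : ℕ) :
    (shift2 ℓ)^[k + 1] u + (2 ^ ℓ - 1) * topDigit ℓ k u = 2 * (shift2 ℓ)^[k] u := by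
  rw [Function.iterate_succ_apply']
  exact shift2_add_mul_div hℓ (iterate_shift2_le hu k)

theorem iterate_shift2_add_sum (hℓ : 1 ≤ ℓ) (hu : u ≤ 2 ^ ℓ - 1) (k : ℕ) :
    (shift2 ℓ)^[k] u + (2 ^ ℓ - 1) * ∑ i ∈ Finset.range k, topDigit ℓ i u * 2 ^ (k - 1 - i) =
      2 ^ k * u := by
  induction k with
  | zero => simp
  | succ k ih =>
    have hstep := iterate_shift2_succ_add hℓ hu k
    rw [sum_range_succ_mul_two_pow, pow_succ', mul_assoc, ← ih]
    linarith

theorem two_pow_mul_eq_add (ℓ u : ℕ) : 2 ^ ℓ * u = u + (2 ^ ℓ - 1) * u := by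
  rw [← one_add_mul, Nat.add_sub_of_le Nat.one_le_two_pow]

theorem isPeriodicPt_shift2 (hℓ : 1 ≤ ℓ) (hu : u ≤ 2 ^ ℓ - 1) :
    Function.IsPeriodicPt (shift2 ℓ) ℓ u := by
  rcases hu.eq_or_lt with rfl | hlt
  · exact Function.iterate_fixed (by simp [shift2]) ℓ
  have hmod : (shift2 ℓ)^[ℓ] u ≡ u [MOD 2 ^ ℓ - 1] := by
    have hsum := iterate_shift2_add_sum hℓ hu ℓ
    rw [two_pow_mul_eq_add] at hsum
    rw [Nat.ModEq, ← Nat.add_mul_mod_self_left, hsum, Nat.add_mul_mod_self_left]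
  rcases (iterate_shift2_le hu ℓ).eq_or_lt with heq | hlt'
  · have hzero : u = 0 := by
      rw [heq] at hmod
      simpa [Nat.ModEq, Nat.mod_eq_of_lt hlt, eq_comm] using hmod
    rw [hzero]
    exact iterate_shift2_zero ℓ
  · exact hmod.eq_of_lt_of_lt hlt' hlt

theorem sum_topDigit_mul_two_pow (hℓ : 1 ≤ ℓ) (hu : u ≤ 2 ^ ℓ - 1) :
    ∑ k ∈ Finset.range ℓ, topDigit ℓ k u * 2 ^ (ℓ - 1 - k) = u := by
  have hsum := iterate_shift2_add_sum hℓ hu ℓ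
  rw [isPeriodicPt_shift2 hℓ hu] at hsum
  have hpow : 2 ≤ 2 ^ ℓ := by simpa using Nat.pow_le_pow_right two_pos hℓ
  rw [two_pow_mul_eq_add] at hsum
  exact Nat.eq_of_mul_eq_mul_left (by omega) (Nat.add_left_cancel hsum)

theorem s2_eq_sum_topDigit (hℓ : 1 ≤ ℓ) (hu : u ≤ 2 ^ ℓ - 1) :
    s2 u = ∑ k ∈ Finset.range ℓ, topDigit ℓ k u := by
  rw [← s2_sum_mul_two_pow (topDigit_lt_two hℓ hu), sum_topDigit_mul_two_pow hℓ hu]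

theorem topDigit_add_period (hℓ : 1 ≤ ℓ) (hu : u ≤ 2 ^ ℓ - 1) (k : ℕ) :
    topDigit ℓ (k + ℓ) u = topDigit ℓ k u := by
  rw [topDigit, Function.iterate_add_apply, isPeriodicPt_shift2 hℓ hu]; rfl

theorem eq_of_topDigit_eq (hℓ : 1 ≤ ℓ) {v : ℕ} (hu : u ≤ 2 ^ ℓ - 1) (hv : v ≤ 2 ^ ℓ - 1)
    (h : ∀ k, topDigit ℓ k u = topDigit ℓ k v) : u = v := by
  rw [← sum_topDigit_mul_two_pow hℓ hu, ← sum_topDigit_mul_two_pow hℓ hv]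
  simp only [h]

theorem topDigit_two_pow {j k : ℕ} (hj : j < ℓ) (hk : k < ℓ) :
    topDigit ℓ k (2 ^ j) = if k + j + 1 = ℓ then 1 else 0 := by
  have hℓ : 1 ≤ ℓ := by omega
  have hle : 2 ^ j ≤ 2 ^ ℓ - 1 := Nat.le_sub_one_of_lt (Nat.pow_lt_pow_right one_lt_two hj)
  obtain ⟨i, hi, hone, hzero⟩ := exists_eq_one_of_sum_eq_one
    ((s2_eq_sum_topDigit hℓ hle).symm.trans (s2_two_pow j))
  have hsum := sum_topDigit_mul_two_pow hℓ hle
  rw [Finset.sum_eq_single_of_mem i hi fun k hk hki => by rw [hzero k hk hki, zero_mul], hone,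
    one_mul] at hsum
  have hij := Nat.pow_right_injective le_rfl hsum
  have hi := Finset.mem_range.1 hi
  split_ifs with h
  · rwa [show k = i by omega]
  · exact hzero k (Finset.mem_range.2 hk) (by omega)

end Shift

/-- The number of leading digits `1` among the coordinates of `δ^k(U)`. -/
def topCount (D : Finset ℕ) (ℓ : ℕ) (U : ℕ → ℕ) (k : ℕ) : ℕ :=
  ∑ d ∈ D, topDigit ℓ k (U d)

/-- The sum of the indices `d` for which `δ^k(u_d)` has leading digit `1`: the amount by which
the support map falls short of doubling at `k`. -/
def topSum (D : Finset ℕ) (ℓ : ℕ) (U : ℕ → ℕ) (k : ℕ) : ℕ :=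
  ∑ d ∈ D, d * topDigit ℓ k (U d)

theorem topSum_le {D : Finset ℕ} {B : ℕ} (hD : ∀ d ∈ D, d ≤ B) (ℓ : ℕ) (U : ℕ → ℕ) (k : ℕ) :
    topSum D ℓ U k ≤ topCount D ℓ U k * B := by
  rw [topCount, Finset.sum_mul]
  refine Finset.sum_le_sum fun d hd => ?_
  rw [mul_comm]
  exact Nat.mul_le_mul_left _ (hD d hd)

theorem topSum_modEq_topCount {D : Finset ℕ} (hD : ∀ d ∈ D, Odd d) (ℓ : ℕ) (U : ℕ → ℕ) (k : ℕ) :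
    topSum D ℓ U k ≡ topCount D ℓ U k [MOD 2] :=
  Nat.ModEq.sum fun d hd => by
    simpa using (show d ≡ 1 [MOD 2] from Nat.odd_iff.1 (hD d hd)).mul_right (topDigit ℓ k (U d))

theorem topDigit_eq_ite {D : Finset ℕ} {ℓ : ℕ} {U : ℕ → ℕ} (hD : 0 ∉ D) {k : ℕ}
    (hk : topCount D ℓ U k ≤ 1) {d : ℕ} (hd : d ∈ D) :
    topDigit ℓ k (U d) = if topSum D ℓ U k = d then 1 else 0 := by
  rcases Nat.le_one_iff_eq_zero_or_eq_one.1 hk with hzero | hone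
  · have hall : ∀ d ∈ D, topDigit ℓ k (U d) = 0 := Finset.sum_eq_zero_iff.1 hzero
    have hsum : topSum D ℓ U k = 0 :=
      Finset.sum_eq_zero fun d hd => by rw [hall d hd, mul_zero]
    rw [hall d hd, hsum, if_neg (ne_of_mem_of_not_mem hd hD).symm]
  · obtain ⟨d₀, hd₀, hd₀one, hzero⟩ := exists_eq_one_of_sum_eq_one hone
    have hsum : topSum D ℓ U k = d₀ := by
      rw [topSum, Finset.sum_eq_single_of_mem d₀ hd₀ fun d hd hne => by
        rw [hzero d hd hne, mul_zero], hd₀one, mul_one]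
    rw [hsum]
    split_ifs with h
    · rwa [← h]
    · exact hzero d hd (Ne.symm h)

namespace IsSolution

variable {D : Finset ℕ} {ℓ : ℕ} {U V : ℕ → ℕ}

theorem sum_iterate_shift2_succ_add (hU : IsSolution D ℓ U) (k : ℕ) :
    ∑ d ∈ D, d * (shift2 ℓ)^[k + 1] (U d) + (2 ^ ℓ - 1) * topSum D ℓ U k =
      2 * ∑ d ∈ D, d * (shift2 ℓ)^[k] (U d) := by
  rw [topSum, Finset.mul_sum, Finset.mul_sum, ← Finset.sum_add_distrib]
  refine Finset.sum_congr rfl fun d _ => ?_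
  linear_combination d * iterate_shift2_succ_add hU.len_pos (hU.bounded d) k

theorem dvd_sum_iterate_shift2 (hU : IsSolution D ℓ U) (k : ℕ) :
    2 ^ ℓ - 1 ∣ ∑ d ∈ D, d * (shift2 ℓ)^[k] (U d) := by
  induction k with
  | zero => exact hU.dvd
  | succ k ih =>
    exact (Nat.dvd_add_left (dvd_mul_right _ _)).1
      (hU.sum_iterate_shift2_succ_add k ▸ ih.mul_left 2)

theorem mul_supportMap (hU : IsSolution D ℓ U) (k : ℕ) :
    (2 ^ ℓ - 1) * supportMap D ℓ U k = ∑ d ∈ D, d * (shift2 ℓ)^[k] (U d) :=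
  Nat.mul_div_cancel' (hU.dvd_sum_iterate_shift2 k)

theorem pred_two_pow_pos (hU : IsSolution D ℓ U) : 0 < 2 ^ ℓ - 1 :=
  Nat.sub_pos_of_lt (Nat.one_lt_two_pow (Nat.one_le_iff_ne_zero.1 hU.len_pos))

theorem supportMap_succ_add (hU : IsSolution D ℓ U) (k : ℕ) :
    supportMap D ℓ U (k + 1) + topSum D ℓ U k = 2 * supportMap D ℓ U k := by
  refine Nat.eq_of_mul_eq_mul_left hU.pred_two_pow_pos ?_
  rw [mul_add, mul_left_comm, hU.mul_supportMap, hU.mul_supportMap,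
    hU.sum_iterate_shift2_succ_add]

theorem supportMap_periodic (hU : IsSolution D ℓ U) :
    Function.Periodic (supportMap D ℓ U) ℓ := fun k => by
  unfold supportMap
  simp only [Function.iterate_add_apply,
    (isPeriodicPt_shift2 hU.len_pos (hU.bounded _)).eq]

theorem topCount_periodic (hU : IsSolution D ℓ U) : Function.Periodic (topCount D ℓ U) ℓ :=
  fun k => Finset.sum_congr rfl fun d _ => topDigit_add_period hU.len_pos (hU.bounded d) k

theorem sum_topCount (hU : IsSolution D ℓ U) :
    ∑ k ∈ Finset.range ℓ, topCount D ℓ U k = weight D U := by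
  simp only [topCount, weight, s2_eq_sum_topDigit hU.len_pos (hU.bounded _)]
  exact Finset.sum_comm

theorem supportMap_pos (hU : IsSolution D ℓ U) (k : ℕ) : 0 < supportMap D ℓ U k := by
  by_contra! hk
  have hzero : ∀ j, supportMap D ℓ U (k + j) = 0 := fun j => by
    induction j with
    | zero => exact Nat.le_zero.1 hk
    | succ j ih =>
      have := hU.supportMap_succ_add (k + j)
      rw [ih] at this
      exact Nat.eq_zero_of_add_eq_zero_right this
  have hφ0 : supportMap D ℓ U 0 = 0 := by
    rw [← hU.supportMap_periodic.nat_mul_eq k]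
    have := hzero (k * (ℓ - 1))
    rwa [show k + k * (ℓ - 1) = k * ℓ by
      rw [← mul_one_add, Nat.add_sub_of_le hU.len_pos]] at this
  have := hU.mul_supportMap 0
  rw [hφ0, mul_zero] at this
  exact hU.pos.ne this

theorem modEq_of_supportMap_eq (hU : IsSolution D ℓ U) (hirr : IrreducibleSol D ℓ U) {j k : ℕ}
    (h : supportMap D ℓ U j = supportMap D ℓ U k) : j ≡ k [MOD ℓ] := by
  have hlt : ∀ i, i % ℓ ∈ (Finset.range ℓ : Set ℕ) := fun i =>
    Finset.mem_coe.2 (Finset.mem_range.2 (Nat.mod_lt i hU.len_pos))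
  refine hirr (hlt j) (hlt k) ?_
  rwa [hU.supportMap_periodic.map_mod_nat, hU.supportMap_periodic.map_mod_nat]

theorem isShiftOf (hU : IsSolution D ℓ U) (hV : IsSolution D ℓ V) (hD : 0 ∉ D)
    (hU1 : ∀ k, topCount D ℓ U k ≤ 1) (hV1 : ∀ k, topCount D ℓ V k ≤ 1) {k₀ : ℕ}
    (h : ∀ k, supportMap D ℓ U (k₀ + k) = supportMap D ℓ V k) : IsShiftOf ℓ U V := by
  have htopSum : ∀ k, topSum D ℓ U (k₀ + k) = topSum D ℓ V k := fun k => by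
    have hUk := hU.supportMap_succ_add (k₀ + k)
    have hVk := hV.supportMap_succ_add k
    rw [add_assoc, h, h] at hUk
    omega
  have hshift : ∀ d, (shift2 ℓ)^[k₀] (U d) = V d := fun d => by
    by_cases hd : d ∈ D
    · refine eq_of_topDigit_eq hU.len_pos (iterate_shift2_le (hU.bounded d) k₀) (hV.bounded d)
        fun k => ?_
      have hdigit : topDigit ℓ k ((shift2 ℓ)^[k₀] (U d)) = topDigit ℓ (k₀ + k) (U d) := by
        rw [topDigit, topDigit, ← Function.iterate_add_apply, add_comm]
      rw [hdigit, topDigit_eq_ite hD (hU1 _) hd, topDigit_eq_ite hD (hV1 _) hd, htopSum]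
    · rw [hU.supp_sub d hd, hV.supp_sub d hd, iterate_shift2_zero]
  refine ⟨k₀ * (ℓ - 1), fun d => ?_⟩
  rw [← hshift d, ← Function.iterate_add_apply, ← Nat.mul_add_one,
    Nat.sub_add_cancel hU.len_pos]
  exact ((isPeriodicPt_shift2 hU.len_pos (hU.bounded d)).const_mul k₀).eq.symm

end IsSolution

/-- The family `u_{2^x - a} = 2^{y+z}`, `u_{a·2^y - b} = 2^z`, `u_{b·2^z - 1} = 1`, whose sum
`∑ d·u_d` telescopes to `2^{x+y+z} - 1`. -/
def threeTerm (a b x y z : ℕ) : ℕ → ℕ :=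
  sol3 (2 ^ x - a) (2 ^ (y + z)) (a * 2 ^ y - b) (2 ^ z) (b * 2 ^ z - 1) 1

/-- The sequence `1, 2, …, 2^{x-1}, a, 2a, …, 2^{y-1}a, b, 2b, …`, which is the support map of
`threeTerm a b x y z` over one period. -/
def threeRun (a b x y k : ℕ) : ℕ :=
  if k < x then 2 ^ k else if k < x + y then 2 ^ (k - x) * a else 2 ^ (k - x - y) * b

/-- The conditions on the parameters under which `threeTerm a b x y z` is a solution of length `ℓ`
for `D` with three nonzero coordinates. -/
structure ThreeTermAdmissible (D : Finset ℕ) (ℓ a b x y z : ℕ) : Prop where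
  length_eq : x + y + z = ℓ
  x_pos : 0 < x
  y_pos : 0 < y
  z_pos : 0 < z
  b_pos : 0 < b
  a_le : a ≤ 2 ^ x
  b_le : b ≤ a * 2 ^ y
  mem₁ : 2 ^ x - a ∈ D
  mem₂ : a * 2 ^ y - b ∈ D
  mem₃ : b * 2 ^ z - 1 ∈ D
  ne₁₂ : 2 ^ x - a ≠ a * 2 ^ y - b
  ne₁₃ : 2 ^ x - a ≠ b * 2 ^ z - 1
  ne₂₃ : a * 2 ^ y - b ≠ b * 2 ^ z - 1

theorem sum_sol3 {D : Finset ℕ} {d₁ d₂ d₃ : ℕ} (h₁ : d₁ ∈ D) (h₂ : d₂ ∈ D) (h₃ : d₃ ∈ D)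
    (h₁₂ : d₁ ≠ d₂) (h₁₃ : d₁ ≠ d₃) (h₂₃ : d₂ ≠ d₃) {f : ℕ → ℕ → ℕ} (hf : ∀ d, f d 0 = 0)
    (u₁ u₂ u₃ : ℕ) :
    ∑ d ∈ D, f d (sol3 d₁ u₁ d₂ u₂ d₃ u₃ d) = f d₁ u₁ + f d₂ u₂ + f d₃ u₃ := by
  have hsub : ({d₁, d₂, d₃} : Finset ℕ) ⊆ D := by
    simp [Finset.insert_subset_iff, h₁, h₂, h₃]
  rw [← Finset.sum_subset hsub fun d _ hd => ?_]
  · rw [Finset.sum_insert (by simp [h₁₂, h₁₃]), Finset.sum_pair h₂₃]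
    simp [sol3, h₁₂.symm, h₁₃.symm, h₂₃.symm, add_assoc]
  · simp only [Finset.mem_insert, Finset.mem_singleton, not_or] at hd
    simp [sol3, hd, hf]

theorem threeRun_injective {a b : ℕ} (ha : Odd a) (hb : Odd b) (ha1 : a ≠ 1) (hb1 : b ≠ 1)
    (hab : a ≠ b) (x y : ℕ) : Function.Injective (threeRun a b x y) := by
  intro j k h
  have hone : Odd 1 := odd_one
  unfold threeRun at h
  rw [← mul_one (2 ^ j), ← mul_one (2 ^ k)] at h
  split_ifs at h
  all_goals
    obtain ⟨hexp, hodd⟩ := two_pow_mul_odd_inj (by assumption) (by assumption) h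
    omega

theorem threeRun_succ {a b x y k : ℕ} (hy : 0 < y) :
    threeRun a b x y (k + 1) =
      if k + 1 = x then a else if k + 1 = x + y then b else 2 * threeRun a b x y k := by
  unfold threeRun
  split_ifs
  all_goals first
    | omega
    | rw [pow_succ']
    | simp [show k + 1 - x = 0 by omega]
    | simp [show k + 1 - x - y = 0 by omega]
    | rw [show k + 1 - x = k - x + 1 by omega, pow_succ', mul_assoc]
    | rw [show k + 1 - x - y = k - x - y + 1 by omega, pow_succ', mul_assoc]

namespace ThreeTermAdmissible

variable {D : Finset ℕ} {ℓ a b x y z : ℕ}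

theorem sum_threeTerm (h : ThreeTermAdmissible D ℓ a b x y z) {f : ℕ → ℕ → ℕ}
    (hf : ∀ d, f d 0 = 0) :
    ∑ d ∈ D, f d (threeTerm a b x y z d) =
      f (2 ^ x - a) (2 ^ (y + z)) + f (a * 2 ^ y - b) (2 ^ z) + f (b * 2 ^ z - 1) 1 :=
  sum_sol3 h.mem₁ h.mem₂ h.mem₃ h.ne₁₂ h.ne₁₃ h.ne₂₃ hf _ _ _

theorem sum_mul_threeTerm (h : ThreeTermAdmissible D ℓ a b x y z) :
    ∑ d ∈ D, d * threeTerm a b x y z d = 2 ^ ℓ - 1 := by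
  obtain ⟨p, hp⟩ := Nat.exists_eq_add_of_le' h.a_le
  obtain ⟨q, hq⟩ := Nat.exists_eq_add_of_le' h.b_le
  have htelescope : 2 ^ ℓ = p * 2 ^ (y + z) + q * 2 ^ z + b * 2 ^ z := by
    calc 2 ^ ℓ = (p + a) * 2 ^ y * 2 ^ z := by rw [← h.length_eq, pow_add, pow_add, hp]
      _ = p * 2 ^ (y + z) + a * 2 ^ y * 2 ^ z := by ring
      _ = p * 2 ^ (y + z) + q * 2 ^ z + b * 2 ^ z := by rw [hq]; ring
  have hb : 0 < b * 2 ^ z := Nat.mul_pos h.b_pos (by positivity)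
  rw [h.sum_threeTerm (f := fun d u => d * u) (by simp), htelescope, hp, hq,
    Nat.add_sub_cancel, Nat.add_sub_cancel]
  omega

theorem isSolution (h : ThreeTermAdmissible D ℓ a b x y z) :
    IsSolution D ℓ (threeTerm a b x y z) := by
  have hℓ : 1 ≤ ℓ := by have := h.length_eq; have := h.x_pos; omega
  have hpow : ∀ j < ℓ, 2 ^ j ≤ 2 ^ ℓ - 1 := fun j hj =>
    Nat.le_sub_one_of_lt (Nat.pow_lt_pow_right one_lt_two hj)
  have hlen := h.length_eq
  have hx := h.x_pos
  refine ⟨hℓ, fun d => ?_, fun d hd => ?_, ?_, ?_⟩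
  · unfold threeTerm sol3
    split_ifs
    exacts [hpow _ (by omega), hpow _ (by omega), hpow 0 hℓ, Nat.zero_le _]
  · have hne : ∀ {e}, e ∈ D → d ≠ e := fun he hde => hd (hde ▸ he)
    simp [threeTerm, sol3, hne h.mem₁, hne h.mem₂, hne h.mem₃]
  · rw [h.sum_mul_threeTerm]
  · rw [h.sum_mul_threeTerm]
    exact Nat.sub_pos_of_lt (Nat.one_lt_two_pow (by omega))

theorem weight_eq (h : ThreeTermAdmissible D ℓ a b x y z) :
    weight D (threeTerm a b x y z) = 3 := by
  rw [weight, h.sum_threeTerm (f := fun _ u => s2 u) (fun _ => by simp [s2]), s2_two_pow,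
    s2_two_pow, show s2 1 = 1 from s2_two_pow 0]

theorem topCount_le_one (h : ThreeTermAdmissible D ℓ a b x y z) (k : ℕ) :
    topCount D ℓ (threeTerm a b x y z) k ≤ 1 := by
  have hlen := h.length_eq
  have hx := h.x_pos
  have hy := h.y_pos
  have hz := h.z_pos
  rw [← h.isSolution.topCount_periodic.map_mod_nat k]
  have hmod : k % ℓ < ℓ := Nat.mod_lt _ h.isSolution.len_pos
  rw [topCount, h.sum_threeTerm (f := fun _ u => topDigit ℓ (k % ℓ) u) fun _ => topDigit_zero _,
    topDigit_two_pow (by omega) hmod, topDigit_two_pow (by omega) hmod, ← pow_zero 2,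
    topDigit_two_pow h.isSolution.len_pos hmod]
  split_ifs <;> omega

theorem topSum_eq (h : ThreeTermAdmissible D ℓ a b x y z) {k : ℕ} (hk : k < ℓ) :
    topSum D ℓ (threeTerm a b x y z) k =
      if k + 1 = x then 2 ^ x - a else if k + 1 = x + y then a * 2 ^ y - b
      else if k + 1 = ℓ then b * 2 ^ z - 1 else 0 := by
  have hlen := h.length_eq
  have hx := h.x_pos
  have hy := h.y_pos
  have hz := h.z_pos
  rw [topSum, h.sum_threeTerm (f := fun d u => d * topDigit ℓ k u)
    fun _ => by rw [topDigit_zero, mul_zero],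
    topDigit_two_pow (by omega) hk, topDigit_two_pow (by omega) hk,
    show topDigit ℓ k 1 = _ from topDigit_two_pow h.isSolution.len_pos hk]
  split_ifs <;> omega

theorem supportMap_eq (h : ThreeTermAdmissible D ℓ a b x y z) {k : ℕ} (hk : k < ℓ) :
    supportMap D ℓ (threeTerm a b x y z) k = threeRun a b x y k := by
  induction k with
  | zero =>
    simp only [supportMap, Function.iterate_zero, id_eq, threeRun, h.x_pos, if_true, pow_zero,
      h.sum_mul_threeTerm, Nat.div_self h.isSolution.pred_two_pow_pos]
  | succ k ih =>
    have hstep := h.isSolution.supportMap_succ_add k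
    rw [ih (by omega), h.topSum_eq (by omega)] at hstep
    rw [threeRun_succ h.y_pos]
    split_ifs at hstep ⊢ with hx hxy hℓ
    · have hval : 2 * threeRun a b x y k = 2 ^ x := by
        rw [threeRun, if_pos (by omega), ← pow_succ', hx]
      have := h.a_le
      omega
    · have hval : 2 * threeRun a b x y k = a * 2 ^ y := by
        have := h.y_pos
        rw [threeRun, if_neg (by omega), if_pos (by omega), ← mul_assoc, ← pow_succ',
          show k - x + 1 = y by omega, mul_comm]
      have := h.b_le
      omega
    · omega
    · omega

theorem irreducibleSol (h : ThreeTermAdmissible D ℓ a b x y z) (ha : Odd a) (hb : Odd b)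
    (ha1 : a ≠ 1) (hb1 : b ≠ 1) (hab : a ≠ b) :
    IrreducibleSol D ℓ (threeTerm a b x y z) :=
  (threeRun_injective ha hb ha1 hb1 hab x y).injOn.congr fun _ hk =>
    (h.supportMap_eq (Finset.mem_range.1 hk)).symm

theorem isShiftOf (h : ThreeTermAdmissible D ℓ a b x y z) {U : ℕ → ℕ} (hU : IsSolution D ℓ U)
    (hD : 0 ∉ D) (hU1 : ∀ k, topCount D ℓ U k ≤ 1) {k₀ : ℕ}
    (hrun : ∀ k < ℓ, supportMap D ℓ U (k₀ + k) = threeRun a b x y k) :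
    IsShiftOf ℓ U (threeTerm a b x y z) := by
  refine hU.isShiftOf h.isSolution hD hU1 h.topCount_le_one (k₀ := k₀) fun k => ?_
  have hmod : k % ℓ < ℓ := Nat.mod_lt _ hU.len_pos
  rw [← h.isSolution.supportMap_periodic.map_mod_nat k, h.supportMap_eq hmod, ← hrun _ hmod]
  exact (hU.supportMap_periodic.const_add k₀).map_mod_nat k |>.symm

end ThreeTermAdmissible

theorem mem_oddD {n d : ℕ} : d ∈ oddD n ↔ d ≤ 2 ^ (n + 1) - 3 ∧ d % 2 = 1 := by
  simp only [oddD, oddUpTo, Finset.mem_filter, Finset.mem_range, Nat.lt_succ_iff]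

theorem odd_of_mem_oddD {n d : ℕ} (hd : d ∈ oddD n) : Odd d :=
  Nat.odd_iff.2 (mem_oddD.1 hd).2

theorem zero_notMem_oddD (n : ℕ) : 0 ∉ oddD n := by simp [mem_oddD]

section Solutions

variable {n i : ℕ}

theorem exists_two_pow_eq_mul (hn : 6 ≤ n) :
    ∃ q, 8 ≤ q ∧ 2 ^ (n - 2) = 2 * q ∧ 2 ^ (n - 1) = 4 * q ∧ 2 ^ (n + 1) = 16 * q := by
  obtain ⟨m, rfl⟩ := Nat.exists_eq_add_of_le hn
  refine ⟨8 * 2 ^ m, ?_, ?_, ?_, ?_⟩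
  · have : 0 < 2 ^ m := by positivity
    omega
  · rw [show 6 + m - 2 = m + 4 by omega, pow_add]; ring
  · rw [show 6 + m - 1 = m + 5 by omega, pow_add]; ring
  · rw [show 6 + m + 1 = m + 7 by omega, pow_add]; ring

theorem threeTermAdmissible_three_left (hn : 6 ≤ n) (hi : i = 5 ∨ i = 7) :
    ThreeTermAdmissible (oddD n) (3 * n - 2) 3 i (n + 1) (n - 1) (n - 2) := by
  obtain ⟨q, hq, hq2, hq1, hq0⟩ := exists_two_pow_eq_mul hn
  rcases hi with rfl | rfl <;> constructor <;> first | omega | (rw [mem_oddD]; omega)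

theorem threeTermAdmissible_three_right (hn : 6 ≤ n) (hi : i = 5 ∨ i = 7) :
    ThreeTermAdmissible (oddD n) (3 * n - 2) i 3 (n + 1) (n - 2) (n - 1) := by
  obtain ⟨q, hq, hq2, hq1, hq0⟩ := exists_two_pow_eq_mul hn
  rcases hi with rfl | rfl <;> constructor <;> first | omega | (rw [mem_oddD]; omega)

theorem threeTerm_three_left (hn : 6 ≤ n) :
    threeTerm 3 i (n + 1) (n - 1) (n - 2) =
      sol3 (2 ^ (n + 1) - 3) (2 ^ (2 * n - 3)) (3 * 2 ^ (n - 1) - i) (2 ^ (n - 2))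
        (i * 2 ^ (n - 2) - 1) 1 := by
  rw [threeTerm, show n - 1 + (n - 2) = 2 * n - 3 by omega]

theorem threeTerm_three_right (hn : 6 ≤ n) :
    threeTerm i 3 (n + 1) (n - 2) (n - 1) =
      sol3 (2 ^ (n + 1) - i) (2 ^ (2 * n - 3)) (i * 2 ^ (n - 2) - 3) (2 ^ (n - 1))
        (3 * 2 ^ (n - 1) - 1) 1 := by
  rw [threeTerm, show n - 2 + (n - 1) = 2 * n - 3 by omega]

end Solutions

/-- An abstract model of an irreducible solution of length `ℓ` for `oddD n`: `φ` plays the role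
of the support map and `m k` counts the leading digits `1` at `k`, so that `2 * φ k - φ (k + 1)`
is a sum of `m k` odd numbers that are at most `2 ^ (n + 1) - 3`. -/
structure DigitCycle (n ℓ : ℕ) (φ m : ℕ → ℕ) : Prop where
  length_pos : 1 ≤ ℓ
  pos : ∀ k, 0 < φ k
  periodic : Function.Periodic φ ℓ
  digit_periodic : Function.Periodic m ℓ
  succ_le : ∀ k, φ (k + 1) ≤ 2 * φ k
  two_mul_le : ∀ k, 2 * φ k ≤ φ (k + 1) + m k * (2 ^ (n + 1) - 3)
  succ_modEq : ∀ k, φ (k + 1) ≡ m k [MOD 2]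
  modEq_of_eq : ∀ {j k}, φ j = φ k → j ≡ k [MOD ℓ]

/-- A digit cycle whose density `(∑ m) / ℓ` lies strictly between `2 / (2n - 1)` and
`1 / (n - 1)`. -/
structure DenseCycle (n ℓ : ℕ) (φ m : ℕ → ℕ) : Prop extends DigitCycle n ℓ φ m where
  six_le : 6 ≤ n
  two_mul_length_lt : 2 * ℓ < (2 * n - 1) * ∑ k ∈ Finset.range ℓ, m k
  mul_sum_lt_length : (n - 1) * ∑ k ∈ Finset.range ℓ, m k < ℓ

/-- The binary logarithm gained by the support map at `k`, corrected by the `n - 1` binary digits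
that each unit of weight may use up; it sums to `ℓ - (n - 1) * ∑ m` over a period. -/
def logExcess (n : ℕ) (φ m : ℕ → ℕ) (k : ℕ) : ℤ :=
  Nat.log 2 (2 * φ k) - Nat.log 2 (φ (k + 1)) - (n - 1) * m k

/-- The indicator of `φ k = a`. Since the support map is injective, its sum over a period is at
most `1`, which is what limits the steps with positive `logExcess`. -/
def visits (φ : ℕ → ℕ) (a k : ℕ) : ℤ := if φ k = a then 1 else 0

theorem visits_nonneg (φ : ℕ → ℕ) (a k : ℕ) : 0 ≤ visits φ a k := by
  unfold visits; split_ifs <;> simp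

theorem exists_eq_of_sum_visits_eq_one {φ : ℕ → ℕ} {a t ℓ : ℕ}
    (h : ∑ k ∈ Finset.range ℓ, visits φ a (k + t) = 1) : ∃ k < ℓ, φ (k + t) = a := by
  obtain ⟨k, hk, hne⟩ := Finset.exists_ne_zero_of_sum_ne_zero (h.trans_ne one_ne_zero)
  exact ⟨k, Finset.mem_range.1 hk, by simpa [visits] using hne⟩

theorem le_cast_log_two {r t : ℕ} (hr : 2 ^ t ≤ r) : (t : ℤ) ≤ Nat.log 2 r :=
  mod_cast Nat.le_log_of_pow_le one_lt_two hr

namespace DigitCycle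

variable {n ℓ k : ℕ} {φ m : ℕ → ℕ}

theorem succ_eq_two_mul (h : DigitCycle n ℓ φ m) (hm : m k = 0) : φ (k + 1) = 2 * φ k := by
  have := h.two_mul_le k
  rw [hm, zero_mul] at this
  exact (h.succ_le k).antisymm this

theorem succ_odd (h : DigitCycle n ℓ φ m) (hm : m k = 1) : Odd (φ (k + 1)) :=
  Nat.odd_iff.2 (by simpa [Nat.ModEq, hm] using h.succ_modEq k)

theorem shift (h : DigitCycle n ℓ φ m) (k₀ : ℕ) :
    DigitCycle n ℓ (fun k => φ (k₀ + k)) (fun k => m (k₀ + k)) where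
  length_pos := h.length_pos
  pos k := h.pos (k₀ + k)
  periodic := h.periodic.const_add k₀
  digit_periodic := h.digit_periodic.const_add k₀
  succ_le k := h.succ_le (k₀ + k)
  two_mul_le k := h.two_mul_le (k₀ + k)
  succ_modEq k := h.succ_modEq (k₀ + k)
  modEq_of_eq hjk := Nat.ModEq.add_left_cancel' k₀ (h.modEq_of_eq hjk)

theorem sum_visits_le_one (h : DigitCycle n ℓ φ m) (a t : ℕ) :
    ∑ k ∈ Finset.range ℓ, visits φ a (k + t) ≤ 1 := by
  simp only [visits, Finset.sum_boole]
  norm_cast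
  refine Finset.card_le_one.2 fun i hi j hj => ?_
  simp only [Finset.mem_filter, Finset.mem_range] at hi hj
  exact (Nat.ModEq.add_right_cancel' t
    (h.modEq_of_eq (hi.2.trans hj.2.symm))).eq_of_lt_of_lt hi.1 hj.1

theorem sum_logExcess (h : DigitCycle n ℓ φ m) :
    ∑ k ∈ Finset.range ℓ, logExcess n φ m k =
      ℓ - (n - 1) * ∑ k ∈ Finset.range ℓ, (m k : ℤ) := by
  have hlog : ∀ k, logExcess n φ m k =
      1 - ((Nat.log 2 (φ (k + 1)) : ℤ) - Nat.log 2 (φ k)) - (n - 1) * m k := fun k => by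
    rw [logExcess, mul_comm 2, Nat.log_mul_base one_lt_two (h.pos k).ne']
    push_cast
    ring
  have hcycle : φ ℓ = φ 0 := by simpa using h.periodic 0
  simp only [hlog, Finset.sum_sub_distrib, ← Finset.mul_sum,
    Finset.sum_range_sub (fun k => (Nat.log 2 (φ k) : ℤ)), hcycle]
  simp

theorem logExcess_periodic (h : DigitCycle n ℓ φ m) :
    Function.Periodic (logExcess n φ m) ℓ := fun k => by
  simp only [logExcess, add_right_comm k ℓ 1, h.periodic _, h.digit_periodic _]

theorem logExcess_eq_zero (h : DigitCycle n ℓ φ m) (hm : m k = 0) : logExcess n φ m k = 0 := by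
  rw [logExcess, h.succ_eq_two_mul hm, hm]
  simp

theorem logExcess_le_sub_log (h : DigitCycle n ℓ φ m) (hm : m k = 1) {t : ℕ}
    (hlt : 2 * φ k < 2 ^ (n + t)) : logExcess n φ m k ≤ t - Nat.log 2 (φ (k + 1)) := by
  have hlog : Nat.log 2 (2 * φ k) < n + t :=
    Nat.log_lt_of_lt_pow (by have := h.pos k; omega) hlt
  rw [logExcess, hm]
  push_cast
  omega

theorem logExcess_le_neg_two_of_two_le (h : DigitCycle n ℓ φ m) (hn : 6 ≤ n) (hm : 2 ≤ m k) :
    logExcess n φ m k ≤ -2 := by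
  obtain ⟨c, hc⟩ := Nat.exists_eq_add_of_le' (one_le_two.trans hm)
  have hdigits : 1 + m k * (2 ^ (n + 1) - 3) ≤ 2 ^ (n + m k) := by
    have hpow : 2 ^ 3 ≤ 2 ^ (n + 1) := Nat.pow_le_pow_right two_pos (by omega)
    calc 1 + m k * (2 ^ (n + 1) - 3) ≤ m k + m k * (2 ^ (n + 1) - 3) := by omega
      _ ≤ m k * 2 ^ (n + 1) := by
        rw [← mul_one_add]
        exact Nat.mul_le_mul_left _ (by omega)
      _ ≤ 2 ^ c * 2 ^ (n + 1) := Nat.mul_le_mul_right _ (hc ▸ Nat.lt_two_pow_self)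
      _ = 2 ^ (n + m k) := by rw [hc, ← pow_add]; congr 1; omega
  have hle : 2 * φ k ≤ φ (k + 1) * 2 ^ (n + m k) :=
    calc 2 * φ k ≤ φ (k + 1) + m k * (2 ^ (n + 1) - 3) := h.two_mul_le k
      _ ≤ φ (k + 1) * (1 + m k * (2 ^ (n + 1) - 3)) := by
        rw [mul_one_add]
        exact Nat.add_le_add_left (Nat.le_mul_of_pos_left _ (h.pos _)) _
      _ ≤ φ (k + 1) * 2 ^ (n + m k) := Nat.mul_le_mul_left _ hdigits
  have hlog : Nat.log 2 (2 * φ k) < Nat.log 2 (φ (k + 1)) + 1 + (n + m k) := by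
    refine Nat.log_lt_of_lt_pow (by have := h.pos k; omega) (hle.trans_lt ?_)
    rw [pow_add 2 (Nat.log 2 (φ (k + 1)) + 1)]
    exact Nat.mul_lt_mul_of_pos_right (Nat.lt_pow_succ_log_self one_lt_two _) (by positivity)
  rw [logExcess]
  zify at *
  nlinarith

theorem logExcess_le_neg_two_of_sixteen_le (h : DigitCycle n ℓ φ m) (hn : 4 ≤ n)
    (hm : m k = 1) (hr : 16 ≤ φ (k + 1)) : logExcess n φ m k ≤ -2 := by
  have hx := h.two_mul_le k
  rw [hm, one_mul] at hx
  rcases lt_or_ge (φ (k + 1)) (2 ^ (n + 1)) with hlt | hge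
  · have := h.logExcess_le_sub_log hm (t := 2) (by rw [pow_succ] at *; omega)
    have := le_cast_log_two (t := 4) hr
    omega
  · have hlog : Nat.log 2 (2 * φ k) ≤ Nat.log 2 (φ (k + 1)) + 1 := by
      rw [← Nat.log_mul_base one_lt_two (h.pos _).ne']
      exact Nat.log_mono_right (by omega)
    rw [logExcess, hm]
    push_cast
    omega

theorem logExcess_le_visits (h : DigitCycle n ℓ φ m) (hn : 6 ≤ n) (k : ℕ) :
    logExcess n φ m k ≤ visits φ 1 (k + 1) + visits φ 3 (k + 1) := by
  have hone := visits_nonneg φ 1 (k + 1)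
  have hthree := visits_nonneg φ 3 (k + 1)
  rcases lt_trichotomy (m k) 1 with hm | hm | hm
  · rw [h.logExcess_eq_zero (by omega)]
    omega
  · have hx := h.two_mul_le k
    rw [hm, one_mul] at hx
    rcases lt_or_ge (φ (k + 1)) 16 with hlt | hge
    · have hpow : 2 ^ 3 ≤ 2 ^ n := Nat.pow_le_pow_right two_pos (by omega)
      have htwo := h.logExcess_le_sub_log hm (t := 2) (by rw [pow_succ] at *; omega)
      have hodd := Nat.odd_iff.1 (h.succ_odd hm)
      rcases lt_or_ge (φ (k + 1)) 4 with hlt' | hge'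
      · obtain hr | hr : φ (k + 1) = 1 ∨ φ (k + 1) = 3 := by omega
        · have := h.logExcess_le_sub_log hm (t := 1) (by omega)
          have : visits φ 1 (k + 1) = 1 := if_pos hr
          omega
        · have := le_cast_log_two (t := 1) (show 2 ^ 1 ≤ φ (k + 1) by omega)
          have : visits φ 3 (k + 1) = 1 := if_pos hr
          omega
      · linarith [le_cast_log_two (t := 2) hge']
    · linarith [h.logExcess_le_neg_two_of_sixteen_le (by omega) hm hge]
  · linarith [h.logExcess_le_neg_two_of_two_le hn hm]

end DigitCycle

/-- The bound on `logExcess` that is available once every `m k` is at most `1`; over a period it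
sums to at most `4 - ∑ m`. -/
def refinedBound (n : ℕ) (φ m : ℕ → ℕ) (k : ℕ) : ℤ :=
  visits φ (2 ^ n) k + 2 * visits φ 1 (k + 1) + visits φ 3 (k + 1) - m k

theorem sum_refinedBound (n ℓ : ℕ) (φ m : ℕ → ℕ) :
    ∑ k ∈ Finset.range ℓ, refinedBound n φ m k =
      ∑ k ∈ Finset.range ℓ, visits φ (2 ^ n) (k + 0) +
        2 * ∑ k ∈ Finset.range ℓ, visits φ 1 (k + 1) +
        ∑ k ∈ Finset.range ℓ, visits φ 3 (k + 1) - ∑ k ∈ Finset.range ℓ, (m k : ℤ) := by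
  simp only [refinedBound, Finset.sum_sub_distrib, Finset.sum_add_distrib, Finset.mul_sum,
    add_zero]

/-- The positions `n`, `n + y`, `n + y + z = ℓ - 1` of the digits `1` of a dense cycle over one
period starting at the value `1`; the support map is doubled at all other positions. -/
structure DigitPositions (n ℓ : ℕ) (m : ℕ → ℕ) (y z : ℕ) : Prop where
  y_pos : 0 < y
  z_pos : 0 < z
  length_eq : n + 1 + y + z = ℓ
  digit₁ : m n = 1
  digit₂ : m (n + y) = 1
  digit₃ : m (n + y + z) = 1
  digit_eq_zero : ∀ k < ℓ, k ≠ n → k ≠ n + y → k ≠ n + y + z → m k = 0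

theorem lt_of_two_pow_mul_le {n : ℕ} (hn : 3 ≤ n) {s c : ℕ} (hc : 3 ≤ c)
    (h : 2 ^ s * c ≤ 2 ^ (n + 1) + 4) : s < n := by
  by_contra! hs
  have hle := (Nat.mul_le_mul (Nat.pow_le_pow_right two_pos hs) hc).trans h
  have hpow : 2 ^ 3 ≤ 2 ^ n := Nat.pow_le_pow_right two_pos hn
  rw [pow_succ] at hle
  omega

theorem succ_lt_of_two_pow_mul_le {n : ℕ} (hn : 4 ≤ n) {s c : ℕ} (hc : 5 ≤ c)
    (h : 2 ^ s * c ≤ 2 ^ (n + 1) + 4) : s + 1 < n := by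
  by_contra! hs
  have hle := (Nat.mul_le_mul (Nat.pow_le_pow_right two_pos (show n - 1 ≤ s by omega)) hc).trans h
  have hpow : 2 ^ 3 ≤ 2 ^ (n - 1) := Nat.pow_le_pow_right two_pos (by omega)
  rw [show n + 1 = n - 1 + 2 by omega, pow_add] at hle
  omega

namespace DenseCycle

variable {n ℓ k : ℕ} {φ m : ℕ → ℕ}

theorem shift (h : DenseCycle n ℓ φ m) (k₀ : ℕ) :
    DenseCycle n ℓ (fun k => φ (k₀ + k)) (fun k => m (k₀ + k)) where
  toDigitCycle := h.toDigitCycle.shift k₀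
  six_le := h.six_le
  two_mul_length_lt := by
    simpa only [add_comm k₀, sum_range_add_of_periodic h.digit_periodic] using h.two_mul_length_lt
  mul_sum_lt_length := by
    simpa only [add_comm k₀, sum_range_add_of_periodic h.digit_periodic] using h.mul_sum_lt_length

theorem one_le_sum_logExcess (h : DenseCycle n ℓ φ m) :
    1 ≤ ∑ k ∈ Finset.range ℓ, logExcess n φ m k := by
  have := h.mul_sum_lt_length
  have := h.six_le
  rw [h.sum_logExcess]
  zify [show 1 ≤ n by omega] at *
  linarith

theorem two_mul_sum_logExcess_lt (h : DenseCycle n ℓ φ m) :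
    2 * ∑ k ∈ Finset.range ℓ, logExcess n φ m k < ∑ k ∈ Finset.range ℓ, (m k : ℤ) := by
  have := h.two_mul_length_lt
  have := h.six_le
  rw [h.sum_logExcess]
  zify [show 1 ≤ 2 * n by omega] at *
  linarith

theorem neg_one_le_logExcess (h : DenseCycle n ℓ φ m) (k : ℕ) : -1 ≤ logExcess n φ m k := by
  rw [← h.logExcess_periodic.map_mod_nat k]
  have hk : k % ℓ ∈ Finset.range ℓ := Finset.mem_range.2 (Nat.mod_lt _ h.length_pos)
  have hrest : ∑ j ∈ (Finset.range ℓ).erase (k % ℓ), logExcess n φ m j ≤ 2 :=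
    calc ∑ j ∈ (Finset.range ℓ).erase (k % ℓ), logExcess n φ m j
        ≤ ∑ j ∈ (Finset.range ℓ).erase (k % ℓ), (visits φ 1 (j + 1) + visits φ 3 (j + 1)) :=
          Finset.sum_le_sum fun j _ => h.logExcess_le_visits h.six_le j
      _ ≤ ∑ j ∈ Finset.range ℓ, (visits φ 1 (j + 1) + visits φ 3 (j + 1)) :=
          Finset.sum_le_sum_of_subset_of_nonneg (Finset.erase_subset _ _) fun j _ _ =>
            add_nonneg (visits_nonneg ..) (visits_nonneg ..)
      _ ≤ 2 := by
          rw [Finset.sum_add_distrib]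
          linarith [h.sum_visits_le_one 1 1, h.sum_visits_le_one 3 1]
  have := h.one_le_sum_logExcess
  rw [← Finset.add_sum_erase _ _ hk] at this
  linarith

theorem digit_le_one (h : DenseCycle n ℓ φ m) (k : ℕ) : m k ≤ 1 := by
  by_contra! hm
  linarith [h.logExcess_le_neg_two_of_two_le h.six_le hm, h.neg_one_le_logExcess k]

theorem succ_lt_sixteen (h : DenseCycle n ℓ φ m) (hm : m k = 1) : φ (k + 1) < 16 := by
  by_contra! hr
  have hn : 4 ≤ n := by linarith [h.six_le]
  linarith [h.logExcess_le_neg_two_of_sixteen_le hn hm hr, h.neg_one_le_logExcess k]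

theorem digit_eq_one_of_odd (h : DenseCycle n ℓ φ m) (hodd : Odd (φ (k + 1))) : m k = 1 := by
  have hmod : φ (k + 1) % 2 = m k % 2 := h.succ_modEq k
  have := h.digit_le_one k
  have := Nat.odd_iff.1 hodd
  omega

theorem digit_eq_zero_of_even (h : DenseCycle n ℓ φ m) (heven : Even (φ (k + 1))) : m k = 0 := by
  have hmod : φ (k + 1) % 2 = m k % 2 := h.succ_modEq k
  have := h.digit_le_one k
  have := Nat.even_iff.1 heven
  omega

theorem doubling_run_of_eq (h : DenseCycle n ℓ φ m) {j c : ℕ} (hφ : φ (k + j) = 2 ^ j * c) :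
    φ k = c ∧ ∀ i < j, m (k + i) = 0 := by
  induction j with
  | zero => simpa using hφ
  | succ j ih =>
    rw [pow_succ', mul_assoc] at hφ
    have hm : m (k + j) = 0 := h.digit_eq_zero_of_even (hφ ▸ even_two_mul _)
    have hprev : φ (k + j) = 2 ^ j * c := by
      have := h.succ_eq_two_mul hm
      exact Nat.eq_of_mul_eq_mul_left two_pos (this.symm.trans hφ)
    obtain ⟨hc, hz⟩ := ih hprev
    refine ⟨hc, fun i hi => ?_⟩
    rcases Nat.lt_succ_iff_lt_or_eq.1 hi with hlt | rfl
    exacts [hz i hlt, hm]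

theorem odd_part_lt_sixteen (h : DenseCycle n ℓ φ m) {s c : ℕ} (hc : Odd c)
    (hφ : φ k = 2 ^ s * c) : c < 16 := by
  obtain ⟨j, hj⟩ : ∃ j, j + 1 + s = k + (s + 1) * ℓ :=
    ⟨k + (s + 1) * (ℓ - 1), by
      conv_rhs => rw [← Nat.sub_add_cancel h.length_pos]
      ring⟩
  have hback := h.doubling_run_of_eq (k := j + 1) (j := s) (c := c)
    (by rw [hj]; exact (h.periodic.nat_mul (s + 1) k).trans hφ)
  rw [← hback.1]
  exact h.succ_lt_sixteen (h.digit_eq_one_of_odd (hback.1 ▸ hc))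

/- Here `2 ^ n < φ k ≤ 2 ^ n + 6` is impossible: as the odd part of `φ k` is less than `16`, such a
`φ k` is divisible by `2 ^ (n - 3) ≥ 8`. -/
theorem le_two_pow_of_digit_eq_one (h : DenseCycle n ℓ φ m) (hm : m k = 1) : φ k ≤ 2 ^ n := by
  by_contra! hlt
  have hle : φ k ≤ 2 ^ n + 6 := by
    have hx := h.two_mul_le k
    have := h.succ_lt_sixteen hm
    have hpow : 2 ^ 6 ≤ 2 ^ n := Nat.pow_le_pow_right two_pos h.six_le
    rw [hm, one_mul] at hx
    omega
  obtain ⟨s, c, hc, hφ⟩ := Nat.exists_eq_two_pow_mul_odd (h.pos k).ne'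
  have hc16 := h.odd_part_lt_sixteen hc hφ
  obtain ⟨t, rfl⟩ := Nat.exists_eq_add_of_le' h.six_le
  have hs : t + 3 ≤ s := by
    by_contra! hs
    have : 2 ^ s * c < 2 ^ (t + 2) * 16 :=
      Nat.mul_lt_mul_of_le_of_lt (Nat.pow_le_pow_right two_pos (by omega)) hc16 (by positivity)
    rw [← hφ, show 2 ^ (t + 2) * 16 = 2 ^ (t + 6) by ring] at this
    omega
  obtain ⟨v, hv⟩ : 2 ^ (t + 3) ∣ φ k := hφ ▸ (pow_dvd_pow 2 hs).mul_right c
  have hpow : 2 ^ (t + 6) = 2 ^ (t + 3) * 8 := by ring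
  have hsmall : 2 ^ 3 ≤ 2 ^ (t + 3) := Nat.pow_le_pow_right two_pos (by omega)
  rw [hv, hpow] at hlt hle
  have hv8 : 8 < v := Nat.lt_of_mul_lt_mul_left hlt
  nlinarith

theorem logExcess_le_of_digit_eq_one (h : DenseCycle n ℓ φ m) (hm : m k = 1) :
    logExcess n φ m k ≤ visits φ (2 ^ n) k + 1 - Nat.log 2 (φ (k + 1)) := by
  have hle := h.le_two_pow_of_digit_eq_one hm
  by_cases hmax : φ k = 2 ^ n
  · rw [visits, if_pos hmax]
    exact h.logExcess_le_sub_log hm (t := 2) (by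
      rw [hmax, ← pow_succ']
      exact Nat.pow_lt_pow_right one_lt_two (by omega))
  · rw [visits, if_neg hmax]
    exact h.logExcess_le_sub_log hm (t := 1) (by omega)

theorem logExcess_le_refinedBound (h : DenseCycle n ℓ φ m) (k : ℕ) :
    logExcess n φ m k ≤ refinedBound n φ m k := by
  have hmax := visits_nonneg φ (2 ^ n) k
  have hone := visits_nonneg φ 1 (k + 1)
  have hthree := visits_nonneg φ 3 (k + 1)
  unfold refinedBound
  rcases Nat.le_one_iff_eq_zero_or_eq_one.1 (h.digit_le_one k) with hm | hm
  · rw [h.logExcess_eq_zero hm, hm]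
    push_cast
    omega
  · have hle := h.logExcess_le_of_digit_eq_one hm
    have hodd := Nat.odd_iff.1 (h.succ_odd hm)
    rw [hm]
    push_cast
    rcases lt_or_ge (φ (k + 1)) 4 with hlt | hge
    · obtain hr | hr : φ (k + 1) = 1 ∨ φ (k + 1) = 3 := by omega
      · have : visits φ 1 (k + 1) = 1 := if_pos hr
        omega
      · have : visits φ 3 (k + 1) = 1 := if_pos hr
        have := le_cast_log_two (t := 1) (show 2 ^ 1 ≤ φ (k + 1) by omega)
        omega
    · have := le_cast_log_two (t := 2) hge
      omega

theorem logExcess_lt_refinedBound_of_eight_le (h : DenseCycle n ℓ φ m) (hm : m k = 1)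
    (hr : 8 ≤ φ (k + 1)) : logExcess n φ m k < refinedBound n φ m k := by
  have hle := h.logExcess_le_of_digit_eq_one hm
  have hlog := le_cast_log_two (t := 3) hr
  have hone := visits_nonneg φ 1 (k + 1)
  have hthree := visits_nonneg φ 3 (k + 1)
  rw [refinedBound, hm]
  push_cast
  omega

theorem logExcess_lt_refinedBound_of_eq_two_pow (h : DenseCycle n ℓ φ m) (hm : m k = 0)
    (hmax : φ k = 2 ^ n) : logExcess n φ m k < refinedBound n φ m k := by
  have hone := visits_nonneg φ 1 (k + 1)
  have hthree := visits_nonneg φ 3 (k + 1)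
  rw [h.logExcess_eq_zero hm, refinedBound, hm, visits, if_pos hmax]
  push_cast
  omega

theorem sum_logExcess_eq_one (h : DenseCycle n ℓ φ m) :
    ∑ k ∈ Finset.range ℓ, logExcess n φ m k = 1 ∧
      ∑ k ∈ Finset.range ℓ, refinedBound n φ m k = 1 ∧ ∑ k ∈ Finset.range ℓ, (m k : ℤ) = 3 := by
  have hle := Finset.sum_le_sum fun k (_ : k ∈ Finset.range ℓ) => h.logExcess_le_refinedBound k
  have hsum := sum_refinedBound n ℓ φ m
  have hmax := h.sum_visits_le_one (2 ^ n) 0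
  have hone := h.sum_visits_le_one 1 1
  have hthree := h.sum_visits_le_one 3 1
  have hpos := h.one_le_sum_logExcess
  have hlt := h.two_mul_sum_logExcess_lt
  omega

theorem sum_digit (h : DenseCycle n ℓ φ m) : ∑ k ∈ Finset.range ℓ, m k = 3 :=
  mod_cast h.sum_logExcess_eq_one.2.2

theorem length_eq (h : DenseCycle n ℓ φ m) : ℓ = 3 * n - 2 := by
  have hsum := h.sum_logExcess
  rw [h.sum_logExcess_eq_one.1, h.sum_logExcess_eq_one.2.2] at hsum
  have := h.six_le
  omega

theorem logExcess_eq_refinedBound (h : DenseCycle n ℓ φ m) (hk : k < ℓ) :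
    logExcess n φ m k = refinedBound n φ m k :=
  (Finset.sum_eq_sum_iff_of_le fun k _ => h.logExcess_le_refinedBound k).1
    (h.sum_logExcess_eq_one.1.trans h.sum_logExcess_eq_one.2.1.symm) k (Finset.mem_range.2 hk)

theorem succ_lt_eight (h : DenseCycle n ℓ φ m) (hk : k < ℓ) (hm : m k = 1) : φ (k + 1) < 8 := by
  by_contra! hr
  exact (h.logExcess_lt_refinedBound_of_eight_le hm hr).ne (h.logExcess_eq_refinedBound hk)

theorem digit_eq_one_of_eq_two_pow (h : DenseCycle n ℓ φ m) (hk : k < ℓ) (hmax : φ k = 2 ^ n) :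
    m k = 1 := by
  refine (Nat.le_one_iff_eq_zero_or_eq_one.1 (h.digit_le_one k)).resolve_left fun hm => ?_
  exact (h.logExcess_lt_refinedBound_of_eq_two_pow hm hmax).ne (h.logExcess_eq_refinedBound hk)

theorem exists_visits (h : DenseCycle n ℓ φ m) :
    (∃ k < ℓ, φ (k + 0) = 2 ^ n) ∧ (∃ k < ℓ, φ (k + 1) = 1) ∧ ∃ k < ℓ, φ (k + 1) = 3 := by
  obtain ⟨-, hbound, hweight⟩ := h.sum_logExcess_eq_one
  have hsum := sum_refinedBound n ℓ φ m
  have hmax := h.sum_visits_le_one (2 ^ n) 0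
  have hone := h.sum_visits_le_one 1 1
  have hthree := h.sum_visits_le_one 3 1
  refine ⟨?_, ?_, ?_⟩ <;> exact exists_eq_of_sum_visits_eq_one (by omega)

theorem exists_start (h : DenseCycle n ℓ φ m) : ∃ k₀, φ k₀ = 1 := by
  obtain ⟨-, ⟨k, -, hk⟩, -⟩ := h.exists_visits
  exact ⟨k + 1, hk⟩

theorem first_run (h : DenseCycle n ℓ φ m) (h0 : φ 0 = 1) :
    φ n = 2 ^ n ∧ ∀ i < n, m i = 0 := by
  obtain ⟨⟨k, -, hk⟩, -, -⟩ := h.exists_visits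
  obtain ⟨j, hj⟩ : ∃ j, j + n = k + n * ℓ :=
    ⟨k + n * (ℓ - 1), by
      conv_rhs => rw [← Nat.sub_add_cancel h.length_pos]
      ring⟩
  have hφ : φ (j + n) = 2 ^ n * 1 := by
    rw [hj, mul_one]
    exact (h.periodic.nat_mul n k).trans hk
  obtain ⟨hj1, hz⟩ := h.doubling_run_of_eq hφ
  have hj0 : j % ℓ = 0 % ℓ := h.modEq_of_eq (hj1.trans h0.symm)
  rw [Nat.zero_mod] at hj0
  have hmj : ∀ i < n, m i = 0 := fun i hi => by
    rw [← hz i hi, ← h.digit_periodic.map_mod_nat i, ← h.digit_periodic.map_mod_nat (j + i),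
      Nat.add_mod, hj0, zero_add, Nat.mod_mod]
  refine ⟨?_, hmj⟩
  simpa [h0] using eq_two_pow_mul_of_doubling (f := φ) (k := 0) (j := n) fun i hi => by
    simpa using h.succ_eq_two_mul (hmj i hi)

theorem digit_pred_length (h : DenseCycle n ℓ φ m) (h0 : φ 0 = 1) :
    φ (ℓ - 1 + 1) = 1 ∧ m (ℓ - 1) = 1 := by
  have hφ : φ (ℓ - 1 + 1) = 1 := by
    rw [Nat.sub_add_cancel h.length_pos, ← zero_add ℓ, h.periodic, h0]
  exact ⟨hφ, h.digit_eq_one_of_odd (by rw [hφ]; exact odd_one)⟩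

theorem exists_digitPositions (h : DenseCycle n ℓ φ m) (h0 : φ 0 = 1) :
    ∃ y z, DigitPositions n ℓ m y z := by
  have hℓ := h.length_eq
  have hn := h.six_le
  obtain ⟨hφn, hz⟩ := h.first_run h0
  have hmn := h.digit_eq_one_of_eq_two_pow (show n < ℓ by omega) hφn
  have hlast := (h.digit_pred_length h0).2
  have hsum := h.sum_digit
  rw [← Finset.add_sum_erase _ _ (Finset.mem_range.2 (show n < ℓ by omega)),
    ← Finset.add_sum_erase _ _ (show ℓ - 1 ∈ (Finset.range ℓ).erase n from
      Finset.mem_erase.2 ⟨by omega, Finset.mem_range.2 (by omega)⟩), hmn, hlast] at hsum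
  obtain ⟨p, hp, hmp, hzero⟩ := exists_eq_one_of_sum_eq_one
    (show ∑ k ∈ ((Finset.range ℓ).erase n).erase (ℓ - 1), m k = 1 by omega)
  simp only [Finset.mem_erase, Finset.mem_range] at hp hzero
  have hnp : n < p := by
    by_contra! hpn
    have := hz p (by omega)
    omega
  refine ⟨p - n, ℓ - 1 - p, by omega, by omega, by omega, hmn, ?_, ?_, fun k hk h1 h2 h3 => ?_⟩
  · rwa [Nat.add_sub_cancel' hnp.le]
  · rwa [show n + (p - n) + (ℓ - 1 - p) = ℓ - 1 by omega]
  · exact hzero k ⟨by omega, h1, hk⟩ (by omega)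

theorem eq_threeRun (h : DenseCycle n ℓ φ m) (h0 : φ 0 = 1) {y z : ℕ}
    (hp : DigitPositions n ℓ m y z) (hk : k < ℓ) :
    φ k = threeRun (φ (n + 1)) (φ (n + y + 1)) (n + 1) y k := by
  have hlen := hp.length_eq
  induction k with
  | zero => simp [threeRun, h0]
  | succ k ih =>
    rw [threeRun_succ hp.y_pos]
    split_ifs with h1 h2
    · rw [h1]
    · rw [h2, add_right_comm]
    · rw [← ih (by omega),
        h.succ_eq_two_mul (hp.digit_eq_zero k (by omega) (by omega) (by omega) (by omega))]

theorem two_mul_le_of_digit_eq_one (h : DenseCycle n ℓ φ m) (hk : k < ℓ) (hm : m k = 1) :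
    2 * φ k ≤ 2 ^ (n + 1) + 4 := by
  have hx := h.two_mul_le k
  have := h.succ_lt_eight hk hm
  have hpow : 2 ^ 3 ≤ 2 ^ (n + 1) := Nat.pow_le_pow_right two_pos (by have := h.six_le; omega)
  rw [hm, one_mul] at hx
  omega

theorem gap_bounds (h : DenseCycle n ℓ φ m) (h0 : φ 0 = 1) {y z : ℕ}
    (hp : DigitPositions n ℓ m y z) :
    2 ^ y * φ (n + 1) ≤ 2 ^ (n + 1) + 4 ∧ 2 ^ z * φ (n + y + 1) ≤ 2 ^ (n + 1) + 4 := by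
  have hrun := fun {k} => h.eq_threeRun (k := k) h0 hp
  have hlen := hp.length_eq
  have hy := hp.y_pos
  have hz := hp.z_pos
  constructor
  · have := h.two_mul_le_of_digit_eq_one (by omega) hp.digit₂
    rwa [hrun (by omega), threeRun, if_neg (by omega), if_pos (by omega), ← mul_assoc, ← pow_succ',
      show n + y - (n + 1) + 1 = y by omega] at this
  · have := h.two_mul_le_of_digit_eq_one (by omega) hp.digit₃
    rwa [hrun (by omega), threeRun, if_neg (by omega), if_neg (by omega), ← mul_assoc, ← pow_succ',
      show n + y + z - (n + 1) - y + 1 = z by omega] at this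

theorem restart_values (h : DenseCycle n ℓ φ m) (h0 : φ 0 = 1) {y z : ℕ}
    (hp : DigitPositions n ℓ m y z) :
    φ (n + 1) = 3 ∧ (φ (n + y + 1) = 5 ∨ φ (n + y + 1) = 7) ∨
      φ (n + y + 1) = 3 ∧ (φ (n + 1) = 5 ∨ φ (n + 1) = 7) := by
  have hlen := hp.length_eq
  have hy := hp.y_pos
  have hz := hp.z_pos
  have hne : ∀ i j, i < ℓ → j < ℓ → i ≠ j → φ i ≠ φ j := fun i j hi hj hij hφ =>
    hij ((h.modEq_of_eq hφ).eq_of_lt_of_lt hi hj)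
  have ha8 := h.succ_lt_eight (by omega) hp.digit₁
  have hb8 := h.succ_lt_eight (by omega) hp.digit₂
  have haodd := Nat.odd_iff.1 (h.succ_odd hp.digit₁)
  have hbodd := Nat.odd_iff.1 (h.succ_odd hp.digit₂)
  have ha1 := hne (n + 1) 0 (by omega) (by omega) (by omega)
  have hb1 := hne (n + y + 1) 0 (by omega) (by omega) (by omega)
  have hab := hne (n + 1) (n + y + 1) (by omega) (by omega) (by omega)
  have hthree : φ (n + 1) = 3 ∨ φ (n + y + 1) = 3 := by
    obtain ⟨-, -, k, hk, hk3⟩ := h.exists_visits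
    have hmk : m k = 1 := h.digit_eq_one_of_odd (by rw [hk3]; decide)
    have hlast := (h.digit_pred_length h0).1
    by_contra! hno
    have := hp.digit_eq_zero k hk (by rintro rfl; omega) (by rintro rfl; omega) fun hkz => by
      rw [show ℓ - 1 = k by omega] at hlast
      omega
    omega
  omega

theorem eq_threeRun_of_start (h : DenseCycle n ℓ φ m) (h0 : φ 0 = 1) :
    ∃ i, (i = 5 ∨ i = 7) ∧
      ((∀ k < ℓ, φ k = threeRun 3 i (n + 1) (n - 1) k) ∨
        ∀ k < ℓ, φ k = threeRun i 3 (n + 1) (n - 2) k) := by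
  obtain ⟨y, z, hp⟩ := h.exists_digitPositions h0
  obtain ⟨hgapy, hgapz⟩ := h.gap_bounds h0 hp
  have hrun : ∀ k < ℓ, φ k = _ := fun k hk => h.eq_threeRun h0 hp hk
  have hlen := hp.length_eq
  have hℓ := h.length_eq
  have hn := h.six_le
  rcases h.restart_values h0 hp with ⟨ha, hb⟩ | ⟨hb, ha⟩
  · have hy := lt_of_two_pow_mul_le (by omega) (by omega) hgapy
    have hz := succ_lt_of_two_pow_mul_le (by omega) (by omega) hgapz
    obtain rfl : y = n - 1 := by omega
    exact ⟨_, hb, .inl (ha ▸ hrun)⟩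
  · have hy := succ_lt_of_two_pow_mul_le (by omega) (by omega) hgapy
    have hz := lt_of_two_pow_mul_le (by omega) (by omega) hgapz
    obtain rfl : y = n - 2 := by omega
    exact ⟨_, ha, .inr (hb ▸ hrun)⟩

end DenseCycle

theorem IsSolution.denseCycle {n ℓ : ℕ} {U : ℕ → ℕ} (hU : IsSolution (oddD n) ℓ U) (hn : 6 ≤ n)
    (hirr : IrreducibleSol (oddD n) ℓ U) (hlo : 2 * ℓ < (2 * n - 1) * weight (oddD n) U)
    (hhi : (n - 1) * weight (oddD n) U < ℓ) :
    DenseCycle n ℓ (supportMap (oddD n) ℓ U) (topCount (oddD n) ℓ U) where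
  length_pos := hU.len_pos
  pos := hU.supportMap_pos
  periodic := hU.supportMap_periodic
  digit_periodic := hU.topCount_periodic
  succ_le k := (Nat.le_add_right _ _).trans (hU.supportMap_succ_add k).le
  two_mul_le k := by
    rw [← hU.supportMap_succ_add k]
    exact Nat.add_le_add_left (topSum_le (fun d hd => (mem_oddD.1 hd).1) ℓ U k) _
  succ_modEq k := by
    have hstep := hU.supportMap_succ_add k
    have hmod := topSum_modEq_topCount (fun d => odd_of_mem_oddD (n := n) (d := d)) ℓ U k
    unfold Nat.ModEq at *
    omega
  modEq_of_eq := hU.modEq_of_supportMap_eq hirr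
  six_le := hn
  two_mul_length_lt := by rwa [hU.sum_topCount]
  mul_sum_lt_length := by rwa [hU.sum_topCount]

theorem DenseCycle.exists_isShiftOf_threeTerm {n ℓ : ℕ} {U : ℕ → ℕ}
    (hc : DenseCycle n ℓ (supportMap (oddD n) ℓ U) (topCount (oddD n) ℓ U))
    (hU : IsSolution (oddD n) ℓ U) :
    ∃ i, (i = 5 ∨ i = 7) ∧
      (IsShiftOf ℓ U (threeTerm 3 i (n + 1) (n - 1) (n - 2)) ∨
        IsShiftOf ℓ U (threeTerm i 3 (n + 1) (n - 2) (n - 1))) := by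
  obtain ⟨k₀, hk₀⟩ := hc.exists_start
  obtain ⟨i, hi, hrun⟩ := (hc.shift k₀).eq_threeRun_of_start hk₀
  obtain rfl := hc.length_eq
  have hD := zero_notMem_oddD n
  exact ⟨i, hi, hrun.imp
    ((threeTermAdmissible_three_left hc.six_le hi).isShiftOf hU hD hc.digit_le_one)
    ((threeTermAdmissible_three_right hc.six_le hi).isShiftOf hU hD hc.digit_le_one)⟩

/-- For `n` large enough and `D = {i : 1 ≤ i ≤ 2^{n+1} − 3, i odd}`: every irreducible
solution with density strictly between `2/(2n−1)` and `1/(n−1)` has density exactly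
`3/(3n−2)` (weight 3, length `3n−2`) and is, up to shift, one of the four listed
three-term solutions (`i ∈ {5,7}`).  Conversely all four are irreducible solutions of
weight 3 and length `3n−2`. -/
theorem density_three_over_3n_sub_two_solutions :
    ∃ N : ℕ, ∀ n : ℕ, N ≤ n →
      (∀ i ∈ ({5, 7} : Finset ℕ),
        (IsSolution (oddD n) (3 * n - 2)
            (sol3 (2 ^ (n + 1) - 3) (2 ^ (2 * n - 3)) (3 * 2 ^ (n - 1) - i) (2 ^ (n - 2)) (i * 2 ^ (n - 2) - 1) 1) ∧
          IrreducibleSol (oddD n) (3 * n - 2)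
            (sol3 (2 ^ (n + 1) - 3) (2 ^ (2 * n - 3)) (3 * 2 ^ (n - 1) - i) (2 ^ (n - 2)) (i * 2 ^ (n - 2) - 1) 1) ∧
          weight (oddD n)
            (sol3 (2 ^ (n + 1) - 3) (2 ^ (2 * n - 3)) (3 * 2 ^ (n - 1) - i) (2 ^ (n - 2)) (i * 2 ^ (n - 2) - 1) 1) = 3) ∧
        (IsSolution (oddD n) (3 * n - 2)
            (sol3 (2 ^ (n + 1) - i) (2 ^ (2 * n - 3)) (i * 2 ^ (n - 2) - 3) (2 ^ (n - 1)) (3 * 2 ^ (n - 1) - 1) 1) ∧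
          IrreducibleSol (oddD n) (3 * n - 2)
            (sol3 (2 ^ (n + 1) - i) (2 ^ (2 * n - 3)) (i * 2 ^ (n - 2) - 3) (2 ^ (n - 1)) (3 * 2 ^ (n - 1) - 1) 1) ∧
          weight (oddD n)
            (sol3 (2 ^ (n + 1) - i) (2 ^ (2 * n - 3)) (i * 2 ^ (n - 2) - 3) (2 ^ (n - 1)) (3 * 2 ^ (n - 1) - 1) 1) = 3)) ∧
      (∀ ℓ U, IsSolution (oddD n) ℓ U → IrreducibleSol (oddD n) ℓ U →
        2 * ℓ < (2 * n - 1) * weight (oddD n) U →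
        (n - 1) * weight (oddD n) U < ℓ →
        weight (oddD n) U = 3 ∧ ℓ = 3 * n - 2 ∧
          ∃ i ∈ ({5, 7} : Finset ℕ),
            IsShiftOf ℓ U
              (sol3 (2 ^ (n + 1) - 3) (2 ^ (2 * n - 3)) (3 * 2 ^ (n - 1) - i) (2 ^ (n - 2)) (i * 2 ^ (n - 2) - 1) 1) ∨
            IsShiftOf ℓ U
              (sol3 (2 ^ (n + 1) - i) (2 ^ (2 * n - 3)) (i * 2 ^ (n - 2) - 3) (2 ^ (n - 1)) (3 * 2 ^ (n - 1) - 1) 1)) := by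
  refine ⟨6, fun n hn => ⟨fun i hi => ?_, fun ℓ U hU hirr hlo hhi => ?_⟩⟩
  · have hi : i = 5 ∨ i = 7 := by simpa using hi
    have hodd : Odd i := Nat.odd_iff.2 (by omega)
    have hthree : Odd 3 := by decide
    have hleft := threeTermAdmissible_three_left hn hi
    have hright := threeTermAdmissible_three_right hn hi
    rw [← threeTerm_three_left hn, ← threeTerm_three_right hn]
    exact
      ⟨⟨hleft.isSolution, hleft.irreducibleSol hthree hodd (by omega) (by omega) (by omega),
          hleft.weight_eq⟩,
        hright.isSolution, hright.irreducibleSol hodd hthree (by omega) (by omega) (by omega),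
        hright.weight_eq⟩
  · have hc := hU.denseCycle hn hirr hlo hhi
    obtain ⟨i, hi, hshift⟩ := hc.exists_isShiftOf_threeTerm hU
    rw [threeTerm_three_left hn, threeTerm_three_right hn] at hshift
    exact ⟨hU.sum_topCount.symm.trans hc.sum_digit, hc.length_eq, i, by simpa using hi, hshift⟩
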